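/- Let F ⊆ X^ω be a regular ω-language. If there is some Borel measure μ on X^ω with 0 < μ(X^ω) < ∞, with support supp(μ) = X^ω, satisfying the balance condition, such that μ(F) = 0, then F is of first Baire category in the Cantor space X^ω. -/

import Mathlib

open Set MeasureTheory Computability

namespace AutoBaire

/-- The Cantor topology on the space of ω-words over `X`:
the product of the discrete topology on `X`. -/
def cantorTop (X : Type) : TopologicalSpace (ℕ → X) :=
  @Pi.topologicalSpace ℕ (fun _ => X) (fun _ => ⊥)

/-- The Borel σ-algebra of the Cantor space. -/
def cantorBorel (X : Type) : MeasurableSpace (ℕ → X) :=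
  @borel (ℕ → X) (cantorTop X)

variable {X : Type}

/-- Concatenation `w·ξ` of a finite word with an ω-word. -/
def wcat (w : List X) (ξ : ℕ → X) : ℕ → X :=
  Stream'.appendStream' w ξ

/-- The ball (cylinder) `w·X^ω`. -/
def cyl (w : List X) : Set (ℕ → X) := {ξ | ∃ η : ℕ → X, ξ = wcat w η}

/-- The ω-language `W·A` for a language `W` and an ω-language `A`. -/
def catOmega (W : Language X) (A : Set (ℕ → X)) : Set (ℕ → X) :=
  {ξ | ∃ w ∈ W, ∃ η ∈ A, ξ = wcat w η}

/-- `V^ω`: the set of ω-words that are infinite concatenations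
`v₁·v₂·⋯` of non-empty words `vᵢ ∈ V`. -/
def omegaPow (V : Language X) : Set (ℕ → X) :=
  {ξ | ∃ f : ℕ → List X, (∀ i, f i ∈ V ∧ f i ≠ []) ∧
    ∀ k, ξ ∈ cyl (((List.range k).map f).flatten)}

/-- Regular languages: those obtained from finite languages via the operations
union, concatenation and star. -/
inductive IsRegLang : Language X → Prop
  | finite (W : Language X) : (W : Set (List X)).Finite → IsRegLang W
  | union (W V : Language X) : IsRegLang W → IsRegLang V → IsRegLang (W + V)
  | concat (W V : Language X) : IsRegLang W → IsRegLang V → IsRegLang (W * V)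
  | star (W : Language X) : IsRegLang W → IsRegLang (W∗)

/-- Regular ω-languages: finite unions `⋃ᵢ Wᵢ·Vᵢ^ω` with `Wᵢ, Vᵢ` regular. -/
def IsRegOmega (F : Set (ℕ → X)) : Prop :=
  ∃ (n : ℕ) (W V : Fin n → Language X),
    (∀ i, IsRegLang (W i) ∧ IsRegLang (V i)) ∧
    F = ⋃ i, catOmega (W i) (omegaPow (V i))

/-- `X*·w·X^ω`: the set of ω-words containing `w` as an infix. -/
def infixOcc (w : List X) : Set (ℕ → X) :=
  {ξ | ∃ u : List X, ξ ∈ cyl (u ++ w)}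

/-- An ω-word is disjunctive if every finite word occurs in it as an infix. -/
def Disjunctive (ξ : ℕ → X) : Prop := ∀ w : List X, ξ ∈ infixOcc w

/-- Ultimately periodic ω-words: `ξ = w·v·v·v·⋯` with `v ≠ e`. -/
def UltPeriodic (ξ : ℕ → X) : Prop :=
  ∃ (w v : List X) (h : v ≠ []), ξ = wcat w (Stream'.cycle v h)

/-- The Automatic Baire property: `F Δ E ⊆ F'` for some regular open
ω-language `E` and some regular ω-language `F'` of first Baire category. -/
def HasABP (F : Set (ℕ → X)) : Prop :=
  ∃ E F' : Set (ℕ → X),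
    IsRegOmega E ∧ @IsOpen _ (cantorTop X) E ∧
    IsRegOmega F' ∧ @IsMeagre _ (cantorTop X) F' ∧
    symmDiff F E ⊆ F'

/-- The measure is finite and non-null: `0 < μ(X^ω) < ∞`. -/
def FiniteNonNull (μ : @MeasureTheory.Measure (ℕ → X) (cantorBorel X)) : Prop :=
  0 < μ Set.univ ∧ μ Set.univ < ⊤

/-- `supp(μ) = X^ω`: every non-empty open set has positive measure. -/
def FullSupport (μ : @MeasureTheory.Measure (ℕ → X) (cantorBorel X)) : Prop :=
  ∀ U : Set (ℕ → X), @IsOpen _ (cantorTop X) U → U.Nonempty → 0 < μ U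

/-- The balance condition: there is `c > 0` such that for all `w ∈ X*`, `x ∈ X`
either `μ(wx·X^ω) = 0` or `c·μ(w·X^ω) ≤ μ(wx·X^ω)`. -/
def Balanced (μ : @MeasureTheory.Measure (ℕ → X) (cantorBorel X)) : Prop :=
  ∃ c : ENNReal, 0 < c ∧ ∀ (w : List X) (x : X),
    μ (cyl (w ++ [x])) = 0 ∨ c * μ (cyl w) ≤ μ (cyl (w ++ [x]))

/-!
Disjunctive ω-words are generic in both senses: the ω-words in which a given word occurs form a
dense open set, whose complement misses, for a balanced measure of full support, a fixed proportion
of every ball and is therefore null.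

A regular ω-language does not separate disjunctive words locally: either it contains none of them,
or it contains all those of some ball. Indeed, if some word is not an infix of any word of `V∗`,
then no word of `W·V^ω` is disjunctive. Otherwise some `t ∈ V∗` is mapped by a finite monoid
recognizing `V∗` to an idempotent `e` generating a minimal right ideal. Minimality lets any word
that follows `t` be continued so that the run returns to `e` and reads `t` again; in a disjunctive
word starting with `t` this continuation occurs arbitrarily late, so the word factors over `V∗`.

If the language is null, the second alternative would make a ball null, against full support; so the
language lies in the meagre set of non-disjunctive words.
-/

section RegularLanguages

variable {α : Type*}

lemma leftQuotient_mul (W V : Language α) (v : List α) :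
    (W * V).leftQuotient v =
      W.leftQuotient v * V + ⨆ b ∈ {b | ∃ a ∈ W, a ++ b = v}, V.leftQuotient b := by
  ext y
  simp only [Language.mem_leftQuotient, Language.mem_add, Language.mem_mul, Language.mem_iSup,
    mem_ofPred_eq]
  constructor
  · rintro ⟨a, ha, b, hb, hab⟩
    rcases List.append_eq_append_iff.mp hab with ⟨r, rfl, rfl⟩ | ⟨r, rfl, rfl⟩
    · exact Or.inr ⟨r, ⟨a, ha, rfl⟩, hb⟩
    · exact Or.inl ⟨r, ha, b, hb, rfl⟩
  · rintro (⟨r, hr, b, hb, rfl⟩ | ⟨b, ⟨a, ha, rfl⟩, hb⟩)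
    · exact ⟨v ++ r, hr, b, hb, List.append_assoc ..⟩
    · exact ⟨a, ha, b ++ y, hb, (List.append_assoc ..).symm⟩

lemma mem_kstar_of_mem {V : Language α} {v : List α} (hv : v ∈ V) : v ∈ V∗ := by
  simpa using Language.join_mem_kstar (L := [v]) (by simpa using hv)

lemma append_mem_kstar {V : Language α} {v w : List α} (hv : v ∈ V∗) (hw : w ∈ V∗) :
    v ++ w ∈ V∗ :=
  kstar_mul_kstar V ▸ Language.append_mem_mul hv hw

lemma exists_cut_of_append_mem_kstar {V : Language α} {v y : List α} (h : v ++ y ∈ V∗)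
    (hv : v ≠ []) :
    ∃ a b r z, a ∈ V∗ ∧ b ++ r ∈ V ∧ z ∈ V∗ ∧ a ++ b = v ∧ r ++ z = y := by
  obtain ⟨L, hflatten, hL⟩ := Language.mem_kstar.mp h
  clear h
  induction L generalizing v with
  | nil => simp_all
  | cons x L ih =>
    obtain ⟨hx, hLV⟩ := List.forall_mem_cons.mp hL
    rcases List.append_eq_append_iff.mp (hflatten.trans List.flatten_cons) with
      ⟨r, rfl, rfl⟩ | ⟨v', rfl, hv'⟩
    · exact ⟨[], v, r, L.flatten, V.nil_mem_kstar, hx, Language.join_mem_kstar hLV, rfl, rfl⟩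
    · rcases eq_or_ne v' [] with rfl | hne
      · obtain rfl : L.flatten = y := hv'
        exact ⟨[], x, [], L.flatten, V.nil_mem_kstar, by rwa [List.append_nil],
          Language.join_mem_kstar hLV, by simp, rfl⟩
      · obtain ⟨a, b, r, z, ha, hbr, hz, rfl, rfl⟩ := ih hne hv'.symm hLV
        exact ⟨x ++ a, b, r, z, append_mem_kstar (mem_kstar_of_mem hx) ha, hbr, hz,
          List.append_assoc .., rfl⟩

lemma leftQuotient_kstar (V : Language α) {v : List α} (hv : v ≠ []) :
    (V∗).leftQuotient v = (⨆ b ∈ {b | ∃ a ∈ V∗, a ++ b = v}, V.leftQuotient b) * V∗ := by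
  ext y
  simp only [Language.mem_leftQuotient, Language.mem_mul, Language.mem_iSup, mem_ofPred_eq]
  constructor
  · intro h
    obtain ⟨a, b, r, z, ha, hbr, hz, hab, hrz⟩ := exists_cut_of_append_mem_kstar h hv
    exact ⟨r, ⟨b, ⟨a, ha, hab⟩, hbr⟩, z, hz, hrz⟩
  · rintro ⟨r, ⟨b, ⟨a, ha, rfl⟩, hr⟩, z, hz, rfl⟩
    have := append_mem_kstar ha (append_mem_kstar (mem_kstar_of_mem hr) hz)
    simpa only [List.append_assoc] using this

lemma isRegular_of_finite {W : Language α} (hW : (W : Set (List α)).Finite) : W.IsRegular := by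
  have hsuffixes : (⋃ w ∈ (W : Set (List α)), {y | y ∈ w.tails}).Finite :=
    hW.biUnion fun w _ => List.finite_toSet _
  refine .of_finite_range_leftQuotient (hsuffixes.finite_subsets.subset ?_)
  rintro _ ⟨v, rfl⟩ y hy
  exact mem_biUnion (x := v ++ y) hy ((List.mem_tails _ _).mpr (List.suffix_append v y))

lemma finite_range_biSup_leftQuotient {V : Language α} (hV : V.IsRegular) :
    (range fun B : Set (List α) => ⨆ b ∈ B, V.leftQuotient b).Finite := by
  refine (hV.finite_range_leftQuotient.finite_subsets.image sSup).subset ?_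
  rintro _ ⟨B, rfl⟩
  exact ⟨V.leftQuotient '' B, image_subset_range .., sSup_image⟩

lemma isRegular_mul {W V : Language α} (hW : W.IsRegular) (hV : V.IsRegular) :
    (W * V).IsRegular := by
  refine .of_finite_range_leftQuotient <|
    (hW.finite_range_leftQuotient.image2 (fun A B => A * V + B)
      (finite_range_biSup_leftQuotient hV)).subset ?_
  rintro _ ⟨v, rfl⟩
  exact ⟨_, mem_range_self v, _, mem_range_self _, (leftQuotient_mul W V v).symm⟩

lemma isRegular_kstar {V : Language α} (hV : V.IsRegular) : (V∗).IsRegular := by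
  refine .of_finite_range_leftQuotient <|
    (((finite_range_biSup_leftQuotient hV).image (· * V∗)).insert V∗).subset ?_
  rintro _ ⟨v, rfl⟩
  rcases eq_or_ne v [] with rfl | hv
  · exact mem_insert _ _
  · exact mem_insert_of_mem _ ⟨_, mem_range_self _, (leftQuotient_kstar V hv).symm⟩

lemma IsRegLang.isRegular {W : Language X} (hW : IsRegLang W) : W.IsRegular := by
  induction hW with
  | finite _ h => exact isRegular_of_finite h
  | union _ _ _ _ hW hV => exact hW.add hV
  | concat _ _ _ _ hW hV => exact isRegular_mul hW hV
  | star _ _ hW => exact isRegular_kstar hW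

end RegularLanguages

section FiniteMonoids

variable {S : Type*} [Monoid S]

/-- `s` generates a minimal right ideal. In a noncommutative monoid `s ∣ x` means `x ∈ s * S`, so
the condition says that every element of the right ideal `s * S` generates it. -/
def IsRightMinimal (s : S) : Prop := ∀ ⦃x⦄, s ∣ x → x ∣ s

lemma IsRightMinimal.mul_right {s : S} (hs : IsRightMinimal s) (t : S) : IsRightMinimal (s * t) :=
  fun _ hx => (hs ((dvd_mul_right s t).trans hx)).trans (dvd_mul_right s t)

lemma IsRightMinimal.mul_left {s : S} (hs : IsRightMinimal s) (t : S) :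
    IsRightMinimal (t * s) := by
  rintro _ ⟨y, rfl⟩
  rw [mul_assoc]
  exact mul_dvd_mul_left t (hs (dvd_mul_right s y))

lemma exists_isRightMinimal [Finite S] : ∃ s : S, IsRightMinimal s := by
  obtain ⟨s, hs⟩ := Finite.exists_min fun s : S => {x | s ∣ x}.ncard
  refine ⟨s, fun x hx => ?_⟩
  have hsub : {y | x ∣ y} ⊆ {y | s ∣ y} := fun _ => hx.trans
  have heq : {y | x ∣ y} = {y | s ∣ y} := eq_of_subset_of_ncard_le hsub (hs x)
  exact heq.superset (dvd_refl s)

lemma exists_isIdempotentElem_isRightMinimal [Finite S] {T : Set S}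
    (hmul : ∀ x ∈ T, ∀ y ∈ T, x * y ∈ T) (hT : ∃ s ∈ T, IsRightMinimal s) :
    ∃ e ∈ T, IsIdempotentElem e ∧ IsRightMinimal e := by
  let _ : TopologicalSpace S := ⊥
  have : DiscreteTopology S := ⟨rfl⟩
  obtain ⟨e, ⟨heT, hmin⟩, he⟩ := exists_idempotent_in_compact_subsemigroup
    (fun _ => continuous_of_discreteTopology) {s ∈ T | IsRightMinimal s} hT
    (toFinite _).isCompact fun x hx y hy => ⟨hmul x hx.1 y hy.1, hx.2.mul_right y⟩
  exact ⟨e, heT, he, hmin⟩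

end FiniteMonoids

section Recognition

variable {α : Type*}

/-- The language `L` is recognized by `φ`: it is the preimage under `φ` of a set of elements. -/
def Recognizes {S : Type*} [Monoid S] (φ : FreeMonoid α →* S) (L : Language α) : Prop :=
  ∃ P : Set S, ∀ w, w ∈ L ↔ φ (.ofList w) ∈ P

/-- The action of words on the states of `M`, in the opposite monoid because a DFA reads the first
letter first. -/
def transitionHom {σ : Type*} (M : DFA α σ) : FreeMonoid α →* (Function.End σ)ᵐᵒᵖ :=
  FreeMonoid.lift fun a => .op fun q => M.step q a

lemma unop_transitionHom_apply {σ : Type*} (M : DFA α σ) (w : List α) (q : σ) :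
    (transitionHom M (.ofList w)).unop q = M.evalFrom q w := by
  induction w generalizing q with
  | nil => rfl
  | cons a w ih =>
    rw [FreeMonoid.ofList_cons, map_mul, MulOpposite.unop_mul, DFA.evalFrom_cons, ← ih]
    rfl

lemma exists_surjective_recognizes {L : Language α} (hL : L.IsRegular) :
    ∃ (S : Type) (_ : Monoid S) (_ : Finite S) (φ : FreeMonoid α →* S),
      Function.Surjective φ ∧ Recognizes φ L := by
  obtain ⟨σ, _, M, rfl⟩ := hL
  have : Finite (Function.End σ)ᵐᵒᵖ :=
    Finite.of_injective (β := σ → σ) MulOpposite.unop MulOpposite.unop_injective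
  refine ⟨MonoidHom.mrange (transitionHom M), inferInstance, inferInstance,
    (transitionHom M).mrangeRestrict, MonoidHom.mrangeRestrict_surjective _,
    {f | f.1.unop M.start ∈ M.accept}, fun w => ?_⟩
  rw [mem_ofPred_eq, MonoidHom.coe_mrangeRestrict, unop_transitionHom_apply]
  rfl

/-- Wherever a run has got inside the right ideal of `e`, some prefix of `τ` leads it back to `e`,
and `t` is read immediately afterwards. -/
lemma exists_universal_return {S : Type*} [Monoid S] [Finite S] {φ : FreeMonoid α →* S}
    (hφ : Function.Surjective φ) {e : S} (he : IsRightMinimal e) (t : List α) :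
    ∃ τ : List α, ∀ s : S, ∃ a, a ++ t <+: τ ∧ e * s * φ (.ofList a) = e := by
  classical
  have := Fintype.ofFinite S
  suffices h : ∀ A : Finset S, ∃ τ : List α, ∀ s ∈ A, ∃ a, a ++ t <+: τ ∧
      e * s * φ (.ofList a) = e by simpa using h Finset.univ
  intro A
  induction A using Finset.induction_on with
  | empty => simp
  | insert s A _ ih =>
    obtain ⟨τ, hτ⟩ := ih
    obtain ⟨m, hm⟩ := he ((dvd_mul_right e s).mul_right (φ (.ofList τ)))
    obtain ⟨q, rfl⟩ := hφ m
    refine ⟨τ ++ q.toList ++ t, Finset.forall_mem_insert .. |>.mpr ⟨⟨τ ++ q.toList, ?_⟩, ?_⟩⟩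
    · refine ⟨List.prefix_rfl, ?_⟩
      rw [FreeMonoid.ofList_append, map_mul, ← mul_assoc]
      exact hm.symm
    · intro s' hs'
      obtain ⟨a, ha, hsa⟩ := hτ s' hs'
      exact ⟨a, ha.trans (List.append_assoc .. ▸ List.prefix_append ..), hsa⟩

lemma exists_mem_kstar_isIdempotentElem_isRightMinimal {V : Language α}
    (hV : ∀ x, ∃ v ∈ V∗, x <:+: v) {S : Type*} [Monoid S] [Finite S] {φ : FreeMonoid α →* S}
    (hφ : Function.Surjective φ) :
    ∃ t ∈ V∗, IsIdempotentElem (φ (.ofList t)) ∧ IsRightMinimal (φ (.ofList t)) := by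
  let T : Set S := {s | ∃ t ∈ V∗, φ (.ofList t) = s}
  have hmul : ∀ x ∈ T, ∀ y ∈ T, x * y ∈ T := by
    rintro _ ⟨v, hv, rfl⟩ _ ⟨w, hw, rfl⟩
    exact ⟨v ++ w, append_mem_kstar hv hw, by rw [FreeMonoid.ofList_append, map_mul]⟩
  have hminimal : ∃ s ∈ T, IsRightMinimal s := by
    obtain ⟨s, hs⟩ := exists_isRightMinimal (S := S)
    obtain ⟨u, rfl⟩ := hφ s
    obtain ⟨_, hv, a, b, rfl⟩ := hV u.toList
    refine ⟨_, ⟨_, hv, rfl⟩, ?_⟩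
    simpa only [FreeMonoid.ofList_append, FreeMonoid.ofList_toList, map_mul] using
      (hs.mul_left _).mul_right _
  obtain ⟨_, ⟨t, ht, rfl⟩, hidem, hmin⟩ := exists_isIdempotentElem_isRightMinimal hmul hminimal
  exact ⟨t, ht, hidem, hmin⟩

end Recognition

section Cylinders

lemma wcat_append (u v : List X) (ξ : ℕ → X) : wcat (u ++ v) ξ = wcat u (wcat v ξ) :=
  Stream'.append_append_stream u v ξ

lemma wcat_mem_cyl (u : List X) (ξ : ℕ → X) : wcat u ξ ∈ cyl u := ⟨ξ, rfl⟩

lemma wcat_injective (u : List X) : Function.Injective (wcat u) :=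
  fun _ _ h => Stream'.append_right_injective u _ _ h

lemma mem_cyl_iff {u : List X} {ξ : ℕ → X} : ξ ∈ cyl u ↔ ∀ i, (hi : i < u.length) → ξ i = u[i] := by
  constructor
  · rintro ⟨η, rfl⟩ i hi
    exact Stream'.get_append_left i u η hi
  · intro h
    refine ⟨fun n => ξ (u.length + n), funext fun i => ?_⟩
    rcases lt_or_ge i u.length with hi | hi
    · exact (h i hi).trans (Stream'.get_append_left i u _ hi).symm
    · obtain ⟨n, rfl⟩ := Nat.exists_eq_add_of_le hi
      exact (Stream'.get_append_right n u fun n => ξ (u.length + n)).symm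

lemma cyl_subset_cyl {u v : List X} (h : u <+: v) : cyl v ⊆ cyl u := by
  obtain ⟨r, rfl⟩ := h
  rintro _ ⟨η, rfl⟩
  exact ⟨wcat r η, wcat_append u r η⟩

lemma prefix_of_mem_cyl {u v : List X} {ξ : ℕ → X} (hu : ξ ∈ cyl u) (hv : ξ ∈ cyl v)
    (hle : u.length ≤ v.length) : u <+: v := by
  rw [mem_cyl_iff] at hu hv
  refine List.prefix_iff_getElem.mpr ⟨hle, fun i hi => ?_⟩
  rw [← hu i hi, hv i (hi.trans_le hle)]

lemma wcat_mem_cyl_append_iff {w u : List X} {η : ℕ → X} :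
    wcat w η ∈ cyl (w ++ u) ↔ η ∈ cyl u := by
  constructor
  · rintro ⟨ζ, h⟩
    exact ⟨ζ, wcat_injective w (h.trans (wcat_append w u ζ))⟩
  · rintro ⟨ζ, rfl⟩
    exact ⟨ζ, (wcat_append w u ζ).symm⟩

/-- The first `n` letters of an ω-word, indexed by `Fin n` so that over a finite alphabet they
range over a finite type. -/
def initial (n : ℕ) (ξ : ℕ → X) : Fin n → X := fun i => ξ i

lemma preimage_initial_singleton {n : ℕ} (f : Fin n → X) :
    initial n ⁻¹' {f} = cyl (List.ofFn f) := by
  ext ξ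
  simp [mem_cyl_iff, initial, funext_iff, Fin.forall_iff]

lemma mem_cyl_ofFn_initial (n : ℕ) (ξ : ℕ → X) : ξ ∈ cyl (List.ofFn (initial n ξ)) :=
  preimage_initial_singleton (initial n ξ) ▸ rfl

end Cylinders

section Disjunctive

lemma Disjunctive.exists_le_length {ξ : ℕ → X} (hξ : Disjunctive ξ) (n : ℕ) (w : List X) :
    ∃ u : List X, n ≤ u.length ∧ ξ ∈ cyl (u ++ w) := by
  obtain ⟨u, hu⟩ := hξ (List.replicate n (ξ 0) ++ w)
  exact ⟨u ++ List.replicate n (ξ 0), by simp, by rwa [List.append_assoc]⟩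

lemma Disjunctive.of_wcat {w : List X} {η : ℕ → X} (h : Disjunctive (wcat w η)) :
    Disjunctive η := by
  intro x
  obtain ⟨u, hle, hu⟩ := h.exists_le_length w.length x
  obtain ⟨r, rfl⟩ : w <+: u :=
    prefix_of_mem_cyl (wcat_mem_cyl w η) (cyl_subset_cyl (List.prefix_append ..) hu) hle
  exact ⟨r, wcat_mem_cyl_append_iff.mp (List.append_assoc .. ▸ hu)⟩

end Disjunctive

section OmegaPowers

variable {V : Language X} {ξ : ℕ → X}

lemma mem_omegaPow_of_step {P : List X → Prop} (hnil : P []) (hcyl : ∀ u, P u → ξ ∈ cyl u)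
    (hstep : ∀ u, P u → ∃ v ∈ V, v ≠ [] ∧ P (u ++ v)) : ξ ∈ omegaPow V := by
  choose next hV hne hP using hstep
  let pref : ℕ → {u // P u} :=
    fun n => n.rec ⟨[], hnil⟩ fun _ u => ⟨u.1 ++ next u.1 u.2, hP u.1 u.2⟩
  let f : ℕ → List X := fun n => next (pref n).1 (pref n).2
  have hflatten : ∀ k, ((List.range k).map f).flatten = (pref k).1 := by
    intro k
    induction k with
    | zero => rfl
    | succ k ih => simp [List.range_succ, ih, f, pref]
  exact ⟨f, fun i => ⟨hV _ _, hne _ _⟩, fun k => hflatten k ▸ hcyl _ (pref k).2⟩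

lemma mem_omegaPow_of_kstar_step {P : List X → Prop} (hnil : P []) (hcyl : ∀ u, P u → ξ ∈ cyl u)
    (hstep : ∀ u, P u → ∃ v ∈ V∗, v ≠ [] ∧ P (u ++ v)) : ξ ∈ omegaPow V := by
  refine mem_omegaPow_of_step (P := fun u => ∃ z ∈ V∗, P (u ++ z)) ⟨[], V.nil_mem_kstar, hnil⟩
    (fun u ⟨z, _, hz⟩ => cyl_subset_cyl (List.prefix_append u z) (hcyl _ hz)) ?_
  rintro u ⟨z, hzV, hz⟩
  obtain ⟨y, hyV, hne, hy⟩ : ∃ y ∈ V∗, y ≠ [] ∧ P (u ++ y) := by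
    rcases eq_or_ne z [] with rfl | hne
    · exact hstep u (by simpa only [List.append_nil] using hz)
    · exact ⟨z, hzV, hne, hz⟩
  obtain ⟨L, rfl, hL⟩ := Language.mem_kstar_iff_exists_nonempty.mp hyV
  cases L with
  | nil => exact absurd rfl hne
  | cons v L =>
    refine ⟨v, (hL v List.mem_cons_self).1, (hL v List.mem_cons_self).2, L.flatten,
      Language.join_mem_kstar fun x hx => (hL x (List.mem_cons_of_mem _ hx)).1, ?_⟩
    rwa [List.append_assoc, ← List.flatten_cons]

lemma le_length_flatten_map_range {f : ℕ → List X} (hf : ∀ i, f i ≠ []) (k : ℕ) :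
    k ≤ ((List.range k).map f).flatten.length := by
  induction k with
  | zero => exact Nat.zero_le _
  | succ k ih =>
    have := List.length_pos_iff.mpr (hf k)
    simp only [List.range_succ, List.map_append, List.flatten_append, List.length_append,
      List.map_singleton, List.flatten_singleton]
    lia

lemma exists_kstar_infix_of_mem_omegaPow (hξ : ξ ∈ omegaPow V) {x : List X}
    (hx : ξ ∈ infixOcc x) : ∃ v ∈ V∗, x <:+: v := by
  obtain ⟨f, hf, hcyl⟩ := hξ
  obtain ⟨u, hu⟩ := hx
  let v := ((List.range (u ++ x).length).map f).flatten
  have hpre : u ++ x <+: v :=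
    prefix_of_mem_cyl hu (hcyl _) (le_length_flatten_map_range (fun i => (hf i).2) _)
  refine ⟨v, Language.join_mem_kstar ?_, (List.suffix_append u x).isInfix.trans hpre.isInfix⟩
  exact List.forall_mem_map.mpr fun i _ => (hf i).1

end OmegaPowers

section Dichotomy

lemma exists_forall_mem_cyl_mem_omegaPow {V : Language X} (hreg : (V∗).IsRegular)
    (hV : ∀ x, ∃ v ∈ V∗, x <:+: v) :
    ∃ t : List X, ∀ ξ ∈ cyl t, Disjunctive ξ → ξ ∈ omegaPow V := by
  obtain ⟨S, _, _, φ, hφ, P, hP⟩ := exists_surjective_recognizes hreg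
  obtain ⟨t, htV, hidem, hmin⟩ := exists_mem_kstar_isIdempotentElem_isRightMinimal hV hφ
  obtain ⟨τ, hτ⟩ := exists_universal_return hφ hmin t
  -- After each factor, `t` is read next and the letters read so far stabilize `φ t`. Hence `φ` maps
  -- the next factor, which begins with `t`, to `φ t`, and so that factor belongs to `V∗`.
  refine ⟨t, fun ξ ht hξ => mem_omegaPow_of_kstar_step
    (P := fun u => ξ ∈ cyl (u ++ t) ∧ φ (.ofList t) * φ (.ofList u) = φ (.ofList t))
    ⟨ht, by rw [FreeMonoid.ofList_nil, map_one, mul_one]⟩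
    (fun u hu => cyl_subset_cyl (List.prefix_append u t) hu.1) ?_⟩
  rintro u ⟨hut, hu⟩
  obtain ⟨w, hlen, hw⟩ := hξ.exists_le_length ((u ++ t).length + 1) τ
  obtain ⟨a, haτ, ha⟩ := hτ (φ (.ofList w))
  obtain ⟨r, rfl⟩ : u ++ t <+: w :=
    prefix_of_mem_cyl hut (cyl_subset_cyl (List.prefix_append w τ) hw) (by lia)
  have hr : r ≠ [] := by
    rintro rfl
    simp at hlen
  have heq : u ++ t ++ r ++ a = u ++ (t ++ r ++ a) := by simp only [List.append_assoc]
  have hφv : φ (.ofList (t ++ r ++ a)) = φ (.ofList t) := by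
    simpa only [FreeMonoid.ofList_append, map_mul, ← mul_assoc, hu, hidem.eq] using ha
  refine ⟨t ++ r ++ a, (hP _).mpr (hφv ▸ (hP t).mp htV), by simp [hr], ?_, ?_⟩
  · refine cyl_subset_cyl ?_ hw
    rw [← heq, List.append_assoc _ a]
    exact (List.prefix_append_right_inj _).mpr haτ
  · rw [FreeMonoid.ofList_append, map_mul, ← mul_assoc, hu, hφv, hidem.eq]

lemma forall_not_disjunctive_or_exists_cyl {F : Set (ℕ → X)} (hF : IsRegOmega F) :
    (∀ ξ ∈ F, ¬ Disjunctive ξ) ∨ ∃ w, ∀ ξ ∈ cyl w, Disjunctive ξ → ξ ∈ F := by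
  obtain ⟨n, W, V, hreg, rfl⟩ := hF
  by_cases h : ∃ i, (∃ w, w ∈ W i) ∧ ∀ x, ∃ v ∈ (V i)∗, x <:+: v
  · obtain ⟨i, ⟨w, hw⟩, hV⟩ := h
    obtain ⟨t, ht⟩ := exists_forall_mem_cyl_mem_omegaPow (isRegular_kstar (hreg i).2.isRegular) hV
    refine Or.inr ⟨w ++ t, fun ξ hξ hdisj => mem_iUnion.mpr ⟨i, ?_⟩⟩
    obtain ⟨η, rfl⟩ := cyl_subset_cyl (List.prefix_append w t) hξ
    exact ⟨w, hw, η, ht η (wcat_mem_cyl_append_iff.mp hξ) hdisj.of_wcat, rfl⟩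
  · refine Or.inl fun ξ hξ hdisj => h ?_
    obtain ⟨i, w, hw, η, hη, rfl⟩ := mem_iUnion.mp hξ
    exact ⟨i, ⟨w, hw⟩, fun x => exists_kstar_infix_of_mem_omegaPow hη (hdisj.of_wcat x)⟩

end Dichotomy

section CantorSpace

local instance : TopologicalSpace (ℕ → X) := cantorTop X

local instance : MeasurableSpace (ℕ → X) := cantorBorel X

local instance : BorelSpace (ℕ → X) := ⟨rfl⟩

lemma cyl_eq_cylinder {u : List X} {ξ : ℕ → X} (hξ : ξ ∈ cyl u) :
    cyl u = PiNat.cylinder ξ u.length := by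
  ext η
  rw [mem_cyl_iff] at hξ
  simp only [mem_cyl_iff, PiNat.cylinder, mem_ofPred_eq]
  exact forall₂_congr fun i hi => by rw [hξ i hi]

lemma isTopologicalBasis_cyl : TopologicalSpace.IsTopologicalBasis (range (cyl (X := X))) := by
  let _ : TopologicalSpace X := ⊥
  have : DiscreteTopology X := ⟨rfl⟩
  refine TopologicalSpace.isTopologicalBasis_of_isOpen_of_nhds ?_ fun ξ U hξ hU => ?_
  · rintro _ ⟨u, rfl⟩
    refine isOpen_iff_forall_mem_open.mpr fun ξ hξ => ⟨cyl u, subset_rfl, ?_, hξ⟩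
    exact cyl_eq_cylinder hξ ▸ PiNat.isOpen_cylinder (fun _ => X) ξ u.length
  · obtain ⟨_, ⟨η, n, rfl⟩, hξn, hsub⟩ :=
      (PiNat.isTopologicalBasis_cylinders fun _ : ℕ => X).exists_subset_of_mem_open hξ hU
    have hcyl := cyl_eq_cylinder (mem_cyl_ofFn_initial n ξ)
    rw [List.length_ofFn, PiNat.mem_cylinder_iff_eq.mp hξn] at hcyl
    exact ⟨_, mem_range_self _, mem_cyl_ofFn_initial n ξ, hcyl.trans_subset hsub⟩

lemma isOpen_cyl (u : List X) : IsOpen (cyl u) := isTopologicalBasis_cyl.isOpen (mem_range_self u)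

lemma isOpen_infixOcc (w : List X) : IsOpen (infixOcc w) := by
  have : infixOcc w = ⋃ u, cyl (u ++ w) := by ext; simp [infixOcc]
  exact this ▸ isOpen_iUnion fun u => isOpen_cyl _

lemma dense_infixOcc (w : List X) : Dense (infixOcc w) := by
  refine isTopologicalBasis_cyl.dense_iff.mpr ?_
  rintro _ ⟨u, rfl⟩ ⟨ξ, -⟩
  have h : wcat (u ++ w) ξ ∈ cyl (u ++ w) := wcat_mem_cyl _ _
  exact ⟨_, cyl_subset_cyl (List.prefix_append u w) h, u, h⟩

lemma isMeagre_setOf_not_disjunctive [Countable X] : IsMeagre {ξ : ℕ → X | ¬ Disjunctive ξ} := by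
  have : ∀ᶠ ξ : ℕ → X in residual (ℕ → X), Disjunctive ξ := eventually_countable_forall.mpr
    fun w => residual_of_dense_open (isOpen_infixOcc w) (dense_infixOcc w)
  simpa only [IsMeagre, compl_ofPred, not_not, Filter.Eventually] using this

lemma measurable_preimage_initial [Finite X] {n : ℕ} (A : Set (Fin n → X)) :
    MeasurableSet (initial n ⁻¹' A) := by
  rw [← biUnion_preimage_singleton]
  exact A.toFinite.measurableSet_biUnion fun f _ =>
    preimage_initial_singleton f ▸ (isOpen_cyl _).measurableSet

lemma antitone_preimage_initial_image (E : Set (ℕ → X)) :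
    Antitone fun n => initial n ⁻¹' (initial n '' E) := by
  rintro m n hmn ξ ⟨η, hη, h⟩
  exact ⟨η, hη, funext fun i => congrFun h (i.castLE hmn)⟩

lemma iInter_preimage_initial_image {E : Set (ℕ → X)} (hE : IsClosed E) :
    ⋂ n, initial n ⁻¹' (initial n '' E) = E := by
  refine subset_antisymm (fun ξ hξ => ?_) (subset_iInter fun n => subset_preimage_image _ E)
  refine hE.closure_subset (isTopologicalBasis_cyl.mem_closure_iff.mpr ?_)
  rintro _ ⟨u, rfl⟩ hu
  obtain ⟨η, hη, h⟩ := mem_iInter.mp hξ u.length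
  refine ⟨η, mem_cyl_iff.mpr fun i hi => ?_, hη⟩
  exact (congrFun h ⟨i, hi⟩).trans (mem_cyl_iff.mp hu i hi)

section Measure

variable [Finite X] {μ : Measure (ℕ → X)}

lemma tendsto_measure_preimage_initial_image [IsFiniteMeasure μ] {E : Set (ℕ → X)}
    (hE : IsClosed E) :
    Filter.Tendsto (fun n => μ (initial n ⁻¹' (initial n '' E))) Filter.atTop (nhds (μ E)) := by
  have := tendsto_measure_iInter_atTop (μ := μ)
    (fun n => (measurable_preimage_initial (initial n '' E)).nullMeasurableSet)
    (antitone_preimage_initial_image E) ⟨0, measure_ne_top μ _⟩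
  rwa [iInter_preimage_initial_image hE] at this

lemma sum_measure_cyl_ofFn {n : ℕ} (A : Finset (Fin n → X)) :
    ∑ f ∈ A, μ (cyl (List.ofFn f)) = μ (initial n ⁻¹' A) := by
  simpa only [preimage_initial_singleton] using
    sum_measure_preimage_singleton (μ := μ) A fun f _ => measurable_preimage_initial {f}

lemma mul_measure_le_measure_diff {E : Set (ℕ → X)} (hE : MeasurableSet E) {δ : ENNReal}
    (h : ∀ u, δ * μ (cyl u) ≤ μ (cyl u \ E)) {n : ℕ} (A : Set (Fin n → X)) :
    δ * μ (initial n ⁻¹' A) ≤ μ (initial n ⁻¹' A \ E) := by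
  obtain ⟨A, rfl⟩ := A.toFinite.exists_finset_coe
  simp only [sdiff_eq, ← Measure.restrict_apply' hE.compl] at h ⊢
  rw [← sum_measure_cyl_ofFn, ← sum_measure_cyl_ofFn, Finset.mul_sum]
  exact Finset.sum_le_sum fun f _ => h _

lemma measure_eq_zero_of_mul_le_diff [IsFiniteMeasure μ] {E : Set (ℕ → X)} (hE : IsClosed E)
    {δ : ENNReal} (hδ : δ ≠ 0) (h : ∀ u, δ * μ (cyl u) ≤ μ (cyl u \ E)) : μ E = 0 := by
  have hlim := tendsto_measure_preimage_initial_image (μ := μ) hE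
  have hle : ∀ n, δ * μ E + μ E ≤ μ (initial n ⁻¹' (initial n '' E)) := fun n => calc
    δ * μ E + μ E
      ≤ δ * μ (initial n ⁻¹' (initial n '' E)) + μ E := by
        gcongr
        exact subset_preimage_image _ E
    _ ≤ μ (initial n ⁻¹' (initial n '' E) \ E) + μ E := by
        gcongr
        exact mul_measure_le_measure_diff hE.measurableSet h _
    _ = μ (initial n ⁻¹' (initial n '' E)) := by
        simpa only [inter_eq_self_of_subset_right (subset_preimage_image _ E)] using
          measure_sdiff_add_inter (μ := μ) (initial n ⁻¹' (initial n '' E)) hE.measurableSet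
  have : δ * μ E + μ E ≤ 0 + μ E := by simpa using ge_of_tendsto' hlim hle
  have := (ENNReal.add_le_add_iff_right (measure_ne_top μ E)).mp this
  simpa [hδ] using this

end Measure

lemma FullSupport.measure_cyl_pos [Nonempty X] {μ : Measure (ℕ → X)} (hμ : FullSupport μ)
    (w : List X) : 0 < μ (cyl w) :=
  hμ _ (isOpen_cyl w) ⟨_, wcat_mem_cyl w fun _ => Classical.arbitrary X⟩

lemma pow_length_mul_measure_cyl_le {μ : Measure (ℕ → X)} {c : ENNReal}
    (hc : ∀ w x, c * μ (cyl w) ≤ μ (cyl (w ++ [x]))) (w t : List X) :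
    c ^ t.length * μ (cyl w) ≤ μ (cyl (w ++ t)) := by
  induction t using List.reverseRecOn with
  | nil => simp
  | append_singleton t x ih =>
    calc c ^ (t ++ [x]).length * μ (cyl w) = c * (c ^ t.length * μ (cyl w)) := by
          rw [List.length_append, List.length_singleton, pow_succ', mul_assoc]
      _ ≤ c * μ (cyl (w ++ t)) := by gcongr
      _ ≤ μ (cyl (w ++ (t ++ [x]))) := List.append_assoc .. ▸ hc (w ++ t) x

lemma Balanced.ae_disjunctive [Finite X] {μ : Measure (ℕ → X)} [IsFiniteMeasure μ]
    (hbal : Balanced μ) (hsupp : FullSupport μ) : ∀ᵐ ξ ∂μ, Disjunctive ξ := by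
  obtain ⟨c, hc, hdich⟩ := hbal
  have hstep : ∀ w x, c * μ (cyl w) ≤ μ (cyl (w ++ [x])) := fun w x =>
    have : Nonempty X := ⟨x⟩
    (hdich w x).resolve_left (hsupp.measure_cyl_pos _).ne'
  refine ae_all_iff.mpr fun t => ?_
  refine measure_eq_zero_of_mul_le_diff (isOpen_infixOcc t).isClosed_compl
    (pow_ne_zero t.length hc.ne') fun w => ?_
  refine (pow_length_mul_measure_cyl_le hstep w t).trans (measure_mono ?_)
  exact fun ξ hξ => ⟨cyl_subset_cyl (List.prefix_append w t) hξ, not_not_intro ⟨w, hξ⟩⟩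

end CantorSpace

theorem stmt7 {X : Type} [Fintype X] (hX : 2 ≤ Fintype.card X)
    (F : Set (ℕ → X)) (hreg : IsRegOmega F)
    (hμ : ∃ μ : @MeasureTheory.Measure (ℕ → X) (cantorBorel X),
      FiniteNonNull μ ∧ FullSupport μ ∧ Balanced μ ∧ μ F = 0) :
    @IsMeagre _ (cantorTop X) F := by
  obtain ⟨μ, hfin, hsupp, hbal, hF⟩ := hμ
  have : @IsFiniteMeasure _ (cantorBorel X) μ := @IsFiniteMeasure.mk _ (_) _ hfin.2
  have : Nonempty X := Fintype.card_pos_iff.mp (by lia)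
  rcases forall_not_disjunctive_or_exists_cyl hreg with hdisj | ⟨w, hw⟩
  · exact @IsMeagre.mono _ (_) _ _ hdisj isMeagre_setOf_not_disjunctive
  · have hnull : μ (cyl w) = 0 := by
      refine measure_mono_null (fun ξ hξ => ?_)
        (measure_union_null hF (hbal.ae_disjunctive hsupp))
      exact or_iff_not_imp_right.mpr fun h => hw ξ hξ (not_not.mp h)
    exact absurd hnull (hsupp.measure_cyl_pos w).ne'

end AutoBaire
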